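/- Let T be a rectangular standard Young tableau with m-diagram φ(T) having components C_1,...,C_k with endpoint sets ∂C_1,...,∂C_k, which partition {1,...,n} where n = |T|. Then the endpoint sets of the components of φ(P(T)) are exactly ρ(∂C_1),...,ρ(∂C_k), where ρ(S) = {s-1 mod n : s ∈ S}. In particular φ(T) and φ(P(T)) have the same number of components. -/

import Mathlib

/-- `T` (as a function `ℕ → ℕ → ℕ`, row-column indexed from `0`) is a rectangular
standard Young tableau with `r` rows, `c` columns and content `{1,…,r*c}` :
rows strictly increase left-to-right, columns strictly increase top-to-bottom. -/
def IsRectSYT (r c : ℕ) (T : ℕ → ℕ → ℕ) : Prop :=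
  (∀ i j, i < r → j + 1 < c → T i j < T i (j + 1)) ∧
  (∀ i j, i + 1 < r → j < c → T i j < T (i + 1) j) ∧
  (∀ i j, i < r → j < c → 1 ≤ T i j ∧ T i j ≤ r * c) ∧
  (∀ v, 1 ≤ v → v ≤ r * c → ∃ i j, i < r ∧ j < c ∧ T i j = v)

/-- One step of the jeu de taquin slide of the empty box at position `p` in an
`r × c` rectangular tableau: slide the right neighbour `b` left if `b < a` (entries
being distinct, `≤` and `<` agree), else slide the lower neighbour `a` up. -/
def slideNext (r c : ℕ) (T : ℕ → ℕ → ℕ) (p : ℕ × ℕ) : ℕ × ℕ :=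
  if p.1 + 1 < r ∧ p.2 + 1 < c then
    (if T p.1 (p.2 + 1) ≤ T (p.1 + 1) p.2 then (p.1, p.2 + 1) else (p.1 + 1, p.2))
  else if p.2 + 1 < c then (p.1, p.2 + 1)
  else if p.1 + 1 < r then (p.1 + 1, p.2)
  else p

/-- The sliding path of the empty box during promotion, starting in the top-left
corner; the path stabilizes once the empty box has nothing below or to its right. -/
def slidePath (r c : ℕ) (T : ℕ → ℕ → ℕ) : ℕ → ℕ × ℕ
  | 0 => (0, 0)
  | k + 1 => slideNext r c T (slidePath r c T k)

open Classical in
/-- Jeu de taquin promotion of a rectangular standard Young tableau: erase the entry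
`1` in the top-left corner, slide along the sliding path, decrement all entries by `1`
and put `r*c` in the final empty box. -/
noncomputable def promote (r c : ℕ) (T : ℕ → ℕ → ℕ) : ℕ → ℕ → ℕ := fun i j =>
  if (i, j) = slidePath r c T (r + c) then r * c
  else if h : ∃ k, slidePath r c T k = (i, j) then
    T (slidePath r c T (Nat.find h + 1)).1 (slidePath r c T (Nat.find h + 1)).2 - 1
  else T i j - 1

/-- The greedy matching between rows `i` and `i+1` of `T` : the list whose `j`-th item
is the column (in row `i`) matched to column `j` of row `i+1`, namely the largest
column `j'` of row `i` with `T i j' ≤ T (i+1) j` that is not already matched. -/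
def partnerList (c : ℕ) (T : ℕ → ℕ → ℕ) (i : ℕ) : ℕ → List ℕ
  | 0 => []
  | j + 1 =>
    let prev := partnerList c T i j
    prev ++ [((List.range c).filter
      (fun j' => decide (T i j' ≤ T (i + 1) j ∧ j' ∉ prev))).foldr max 0]

/-- The column of row `i` matched to column `j` of row `i+1` by the greedy algorithm. -/
def partnerCol (c : ℕ) (T : ℕ → ℕ → ℕ) (i j : ℕ) : ℕ :=
  (partnerList c T i (j + 1)).getD j 0

/-- The m-diagram `φ(T)` of an `r × c` rectangular standard Young tableau: the union
over `0 ≤ i ≤ r-2` of the arcs `(T i (partnerCol c T i j), T (i+1) j)` of the greedy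
matchings between consecutive rows. -/
def mDiagram (r c : ℕ) (T : ℕ → ℕ → ℕ) : Finset (ℕ × ℕ) :=
  ((Finset.range (r - 1)) ×ˢ (Finset.range c)).image
    (fun p => (T p.1 (partnerCol c T p.1 p.2), T (p.1 + 1) p.2))

/-- The set of endpoints of a collection of arcs. -/
def endpoints (C : Finset (ℕ × ℕ)) : Finset ℕ := C.image Prod.fst ∪ C.image Prod.snd

/-- Two arcs share an endpoint. -/
def SharesEndpoint (p q : ℕ × ℕ) : Prop :=
  p.1 = q.1 ∨ p.1 = q.2 ∨ p.2 = q.1 ∨ p.2 = q.2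

/-- Two arcs cross. -/
def Crosses (p q : ℕ × ℕ) : Prop :=
  (p.1 < q.1 ∧ q.1 < p.2 ∧ p.2 < q.2) ∨ (q.1 < p.1 ∧ p.1 < q.2 ∧ q.2 < p.2)

/-- `C` is a nonempty subcollection of `M` closed under sharing endpoints, such that
no arc of `M` outside `C` crosses an arc of `C`. -/
def IsPreSubdiagram (M C : Finset (ℕ × ℕ)) : Prop :=
  C ⊆ M ∧ C.Nonempty ∧
  (∀ p ∈ M, ∀ q ∈ C, SharesEndpoint p q → p ∈ C) ∧
  (∀ p ∈ M, p ∉ C → ∀ q ∈ C, ¬ Crosses p q)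

/-- `C` is a sub-diagram of `M` : a nonempty **proper** subcollection closed under
sharing endpoints and not crossed from outside. -/
def IsSubdiagram (M C : Finset (ℕ × ℕ)) : Prop := IsPreSubdiagram M C ∧ C ≠ M

/-- `C` is a component of `M` : it satisfies the closure conditions and has no proper
subcollection forming a sub-diagram of `M`. -/
def IsComponent (M C : Finset (ℕ × ℕ)) : Prop :=
  IsPreSubdiagram M C ∧ ∀ C', C' ⊂ C → ¬ IsSubdiagram M C'

/-- A collection of arcs is uniform if its endpoints are consecutive integers. -/
def IsUniform (C : Finset (ℕ × ℕ)) : Prop := ∃ a b, endpoints C = Finset.Icc a b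

/-- `ρ` on `{1,…,n}` : `i ↦ i-1 mod n`, with representatives in `{1,…,n}`. -/
def rotIdx (n i : ℕ) : ℕ := if i = 1 then n else i - 1

/-- Rotation of an arc, reordered so the smaller endpoint comes first. -/
def rotArc (n : ℕ) (p : ℕ × ℕ) : ℕ × ℕ :=
  (min (rotIdx n p.1) (rotIdx n p.2), max (rotIdx n p.1) (rotIdx n p.2))

/-- `d`-fold rotation of a set of boundary points. -/
def rotSetPow (n d : ℕ) (S : Finset ℕ) : Finset ℕ := S.image ((rotIdx n)^[d])

/-- The partition of the boundary `{1,…,r*c}` induced by the endpoint sets of the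
components of `φ(T)` is invariant under `d`-fold rotation. -/
def RotSym (r c : ℕ) (T : ℕ → ℕ → ℕ) (d : ℕ) : Prop :=
  {A : Finset ℕ | ∃ C, IsComponent (mDiagram r c T) C ∧ A = rotSetPow (r * c) d (endpoints C)}
    = {A : Finset ℕ | ∃ C, IsComponent (mDiagram r c T) C ∧ A = endpoints C}


/-! ### Abstract noncrossing matchings -/

structure IsMatch (A B : ℕ → Prop) (R : ℕ → ℕ → Prop) : Prop where
  left : ∀ {x y}, R x y → A x
  right : ∀ {x y}, R x y → B y
  lt : ∀ {x y}, R x y → x < y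
  exL : ∀ {x}, A x → ∃ y, R x y
  exR : ∀ {y}, B y → ∃ x, R x y
  uniqL : ∀ {x y z}, R x y → R x z → y = z
  uniqR : ∀ {x y z}, R x z → R y z → x = y
  nc : ∀ {x y x' y'}, R x y → R x' y' → x < x' → x' < y → y < y' → False

/-- An arc of a noncrossing matching only depends on the letters it covers. -/
theorem IsMatch.local_arc {A B A' B' : ℕ → Prop} {R R' : ℕ → ℕ → Prop}
    (h : IsMatch A B R) (h' : IsMatch A' B' R') :
    ∀ (d x y : ℕ), y - x ≤ d → R x y →
      (∀ v, x ≤ v → v ≤ y → (A v ↔ A' v) ∧ (B v ↔ B' v)) → R' x y := by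
  intro d
  induction d with
  | zero =>
    intro x y hd hR _
    have := h.lt hR
    omega
  | succ d ih =>
    intro x y hd hR hag
    have hxy := h.lt hR
    obtain ⟨q, hq⟩ := h'.exL (((hag x le_rfl hxy.le).1).1 (h.left hR))
    obtain ⟨p, hp⟩ := h'.exR (((hag y hxy.le le_rfl).2).1 (h.right hR))
    have hxq := h'.lt hq
    have hpy := h'.lt hp
    have hqy : y ≤ q := by
      by_contra hlt
      push Not at hlt
      obtain ⟨z, hz⟩ := h.exR (((hag q hxq.le hlt.le).2).2 (h'.right hq))
      have hzq := h.lt hz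
      rcases lt_trichotomy z x with hc | hc | hc
      · exact h.nc hz hR hc hxq hlt
      · subst hc
        have := h.uniqL hz hR
        omega
      · have := ih z q (by omega) hz (fun v h1 h2 => hag v (by omega) (by omega))
        have := h'.uniqR this hq
        omega
    have hpx : p ≤ x := by
      by_contra hlt
      push Not at hlt
      obtain ⟨z, hz⟩ := h.exL (((hag p hlt.le hpy.le).1).2 (h'.left hp))
      have hzq := h.lt hz
      rcases lt_trichotomy z y with hc | hc | hc
      · have := ih p z (by omega) hz (fun v h1 h2 => hag v (by omega) (by omega))
        have := h'.uniqL this hp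
        omega
      · subst hc
        have := h.uniqR hz hR
        omega
      · exact h.nc hR hz hlt hpy hc
    rcases eq_or_lt_of_le hqy with hc | hc
    · rw [hc]; exact hq
    · rcases eq_or_lt_of_le hpx with hc2 | hc2
      · rw [← hc2]; exact hp
      · exact (h'.nc hp hq hc2 hxy hc).elim

/-- Closedness of a set of vertices under arcs and crossings. -/
def ClosedS (r : ℕ) (R : ℕ → ℕ → ℕ → Prop) (S : Set ℕ) : Prop :=
  (∀ i, i + 1 < r → ∀ x y, R i x y → (x ∈ S ↔ y ∈ S)) ∧
  (∀ i, i + 1 < r → ∀ i', i' + 1 < r → ∀ x y x' y', R i x y → R i' x' y' →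
    x < x' → x' < y → y < y' → (x ∈ S ↔ x' ∈ S))

theorem ClosedS.compl {r : ℕ} {R : ℕ → ℕ → ℕ → Prop} {S : Set ℕ} (h : ClosedS r R S) :
    ClosedS r R Sᶜ := by
  refine ⟨fun i hi x y hR => ?_, fun i hi i' hi' x y x' y' h1 h2 a b c => ?_⟩
  · simpa using not_congr (h.1 i hi x y hR)
  · simpa using not_congr (h.2 i hi i' hi' x y x' y' h1 h2 a b c)

/-- Transfer of closedness between two systems agreeing away from `b`. -/
theorem transfer {r : ℕ} {W W' : ℕ → ℕ → Prop} {R R' : ℕ → ℕ → ℕ → Prop} {b : ℕ → ℕ}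
    (hM : ∀ i, i + 1 < r → IsMatch (W i) (W (i + 1)) (R i))
    (hM' : ∀ i, i + 1 < r → IsMatch (W' i) (W' (i + 1)) (R' i))
    (hag : ∀ v, (∀ j, j ≤ r → v ≠ b j) → ∀ i, i < r → (W i v ↔ W' i v))
    {S : Set ℕ} (hS : ClosedS r R S) (hb : ∀ j, j ≤ r → b j ∉ S)
    (hst : ∀ i, i + 1 < r → ∀ x y, R i x y → x ∈ S → ∀ j, j ≤ r → x ≤ b j → b j ≤ y → False) :
    ClosedS r R' S := by
  have keep : ∀ i, i + 1 < r → ∀ x y, R i x y → x ∈ S → ∀ k, k + 1 < r → ∀ p q, R k p q →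
      x ≤ p → q ≤ y → R' k p q := by
    intro i hi x y hR hx k hk p q hpq h1 h2
    refine (hM k hk).local_arc (hM' k hk) _ p q le_rfl hpq (fun v hv1 hv2 => ?_)
    have hv : ∀ j, j ≤ r → v ≠ b j := by
      intro j hj hvj
      exact hst i hi x y hR hx j hj (by omega) (by omega)
    exact ⟨hag v hv k (by omega), hag v hv (k + 1) hk⟩
  have nb : ∀ x ∈ S, ∀ j, j ≤ r → x ≠ b j := by
    intro x hx j hj h
    exact hb j hj (h ▸ hx)
  -- arcs of `R'` touching `S` are arcs of `R`
  have old : ∀ i, i + 1 < r → ∀ x y, R' i x y → (x ∈ S ∨ y ∈ S) → R i x y ∧ x ∈ S ∧ y ∈ S := by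
    intro i hi x y hR' hxy
    rcases hxy with hx | hy
    · have hW := (hag x (nb x hx) i (by omega)).2 ((hM' i hi).left hR')
      obtain ⟨z, hz⟩ := (hM i hi).exL hW
      have := keep i hi x z hz hx i hi x z hz le_rfl le_rfl
      have e := (hM' i hi).uniqL this hR'
      subst e
      exact ⟨hz, hx, (hS.1 i hi _ _ hz).1 hx⟩
    · have hW := (hag y (nb y hy) (i + 1) (by omega)).2 ((hM' i hi).right hR')
      obtain ⟨z, hz⟩ := (hM i hi).exR hW
      have hzS := (hS.1 i hi _ _ hz).2 hy
      have := keep i hi z y hz hzS i hi z y hz le_rfl le_rfl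
      have e := (hM' i hi).uniqR this hR'
      subst e
      exact ⟨hz, hzS, hy⟩
  refine ⟨?_, ?_⟩
  · intro i hi x y hR'
    constructor
    · intro hx; exact (old i hi x y hR' (Or.inl hx)).2.2
    · intro hy; exact (old i hi x y hR' (Or.inr hy)).2.1
  · intro i hi k hk x y p q hxy hpq h1 h2 h3
    constructor
    · intro hx
      by_contra hp
      obtain ⟨hR, -, hy⟩ := old i hi x y hxy (Or.inl hx)
      -- `p` lies in `(x,y)`
      have hpb : ∀ j, j ≤ r → p ≠ b j := fun j hj e =>
        hst i hi x y hR hx j hj (by omega) (by omega)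
      have hW := (hag p hpb k (by omega)).2 ((hM' k hk).left hpq)
      obtain ⟨z, hz⟩ := (hM k hk).exL hW
      have hpz := (hM k hk).lt hz
      rcases lt_trichotomy z y with hc | hc | hc
      · have := keep i hi x y hR hx k hk p z hz h1.le hc.le
        have := (hM' k hk).uniqL this hpq
        omega
      · subst hc
        exact hp ((hS.1 k hk _ _ hz).2 hy)
      · exact hp ((hS.2 i hi k hk _ _ _ _ hR hz h1 h2 hc).1 hx)
    · intro hp
      by_contra hx
      obtain ⟨hR, -, hq⟩ := old k hk p q hpq (Or.inl hp)
      have hyb : ∀ j, j ≤ r → y ≠ b j := fun j hj e =>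
        hst k hk p q hR hp j hj (by omega) (by omega)
      have hW := (hag y hyb (i + 1) (by omega)).2 ((hM' i hi).right hxy)
      obtain ⟨z, hz⟩ := (hM i hi).exR hW
      have hzy := (hM i hi).lt hz
      have hyS : y ∉ S := fun hy => hx (old i hi x y hxy (Or.inr hy)).2.1
      rcases lt_trichotomy z p with hc | hc | hc
      · exact hyS ((hS.1 i hi _ _ hz).1 ((hS.2 i hi k hk _ _ _ _ hz hR hc h2 h3).2 hp))
      · subst hc
        exact hyS ((hS.1 i hi _ _ hz).1 hp)
      · have := keep k hk p q hR hp i hi z y hz hc.le h3.le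
        have := (hM' i hi).uniqR this hxy
        omega

/-- Arcs of a closed set avoiding `b 0` do not straddle any `b j` (forward chain). -/
theorem straddle1 {r : ℕ} {R : ℕ → ℕ → ℕ → Prop} {b : ℕ → ℕ}
    (hmono : ∀ i, i + 1 < r → b i < b (i + 1))
    (hchain : ∀ i, i + 1 < r → ∃ a, R i a (b (i + 1)) ∧ a ≤ b i)
    (hlow : ∀ i, i + 1 < r → ∀ x y, R i x y → b 0 ≤ x)
    {S : Set ℕ} (hS : ClosedS r R S) (hb : b 0 ∉ S) :
    ∀ j, j < r → ∀ i, i + 1 < r → ∀ x y, R i x y → x ∈ S → x ≤ b j → b j ≤ y → False := by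
  intro j
  induction j with
  | zero =>
    intro _ i hi x y hR hx h1 h2
    have := hlow i hi x y hR
    have : x = b 0 := by omega
    exact hb (this ▸ hx)
  | succ j ih =>
    intro hj i hi x y hR hx h1 h2
    have hm := hmono j hj
    by_cases hc : x ≤ b j
    · exact ih (by omega) i hi x y hR hx hc (by omega)
    · obtain ⟨a, ha, hab⟩ := hchain j hj
      have haS : a ∉ S := fun h => ih (by omega) j hj a _ ha h hab hm.le
      have hbS : b (j + 1) ∉ S := fun h => haS ((hS.1 j hj _ _ ha).2 h)
      rcases eq_or_lt_of_le h1 with e | h1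
      · exact hbS (e ▸ hx)
      rcases eq_or_lt_of_le h2 with e | h2
      · exact hbS (e ▸ (hS.1 i hi _ _ hR).1 hx)
      exact haS ((hS.2 j hj i hi _ _ _ _ ha hR (by omega) h1 h2).2 hx)

/-- Backward chain version. -/
theorem straddle2 {r : ℕ} {R : ℕ → ℕ → ℕ → Prop} {b : ℕ → ℕ}
    (hmono : ∀ i, i < r → b i < b (i + 1))
    (hchain : ∀ i, i + 1 < r → ∃ a, R i (b (i + 1)) a ∧ b (i + 1 + 1) ≤ a)
    (hhigh : ∀ i, i + 1 < r → ∀ x y, R i x y → y ≤ b r)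
    {S : Set ℕ} (hS : ClosedS r R S) (hb : b r ∉ S) :
    ∀ d j, j + d = r → 0 < j → ∀ i, i + 1 < r → ∀ x y, R i x y → x ∈ S → x ≤ b j → b j ≤ y →
      False := by
  intro d
  induction d with
  | zero =>
    intro j hj _ i hi x y hR hx h1 h2
    have := hhigh i hi x y hR
    have hj : j = r := by omega
    subst hj
    have : y = b j := by omega
    exact hb (this ▸ (hS.1 i hi _ _ hR).1 hx)
  | succ d ih =>
    intro j hj hj0 i hi x y hR hx h1 h2
    have hm := hmono j (by omega)
    by_cases hc : b (j + 1) ≤ y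
    · exact ih (j + 1) (by omega) (by omega) i hi x y hR hx (by omega) hc
    · obtain ⟨k, rfl⟩ : ∃ k, j = k + 1 := ⟨j - 1, by omega⟩
      obtain ⟨a, ha, hab⟩ := hchain k (by omega)
      have hbS : b (k + 1) ∉ S := fun h =>
        ih (k + 1 + 1) (by omega) (by omega) k (by omega) _ a ha h hm.le hab
      rcases eq_or_lt_of_le h1 with e | h1
      · exact hbS (e ▸ hx)
      rcases eq_or_lt_of_le h2 with e | h2
      · exact hbS (e ▸ (hS.1 i hi _ _ hR).1 hx)
      exact hbS ((hS.2 i hi k (by omega) _ _ _ _ hR ha h1 h2 (by omega)).1 hx)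

/-- The main abstract equivalence. -/
theorem closed_iff {r : ℕ} (hr : 1 < r) {W W' : ℕ → ℕ → Prop} {R R' : ℕ → ℕ → ℕ → Prop}
    {b : ℕ → ℕ}
    (hM : ∀ i, i + 1 < r → IsMatch (W i) (W (i + 1)) (R i))
    (hM' : ∀ i, i + 1 < r → IsMatch (W' i) (W' (i + 1)) (R' i))
    (hag : ∀ v, (∀ j, j ≤ r → v ≠ b j) → ∀ i, i < r → (W i v ↔ W' i v))
    (hmono : ∀ i, i < r → b i < b (i + 1))
    (hchain : ∀ i, i + 1 < r → ∃ a, R i a (b (i + 1)) ∧ a ≤ b i)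
    (hlow : ∀ i, i + 1 < r → ∀ x y, R i x y → b 0 ≤ x ∧ y < b r)
    (hchain' : ∀ i, i + 1 < r → ∃ a, R' i (b (i + 1)) a ∧ b (i + 1 + 1) ≤ a)
    (hhigh : ∀ i, i + 1 < r → ∀ x y, R' i x y → b 0 < x ∧ y ≤ b r)
    {S : Set ℕ} (hSc : b 0 ∈ S ↔ b r ∈ S) : ClosedS r R S ↔ ClosedS r R' S := by
  have key1 : ∀ S : Set ℕ, (b 0 ∈ S ↔ b r ∈ S) → b 0 ∉ S → ClosedS r R S → ClosedS r R' S := by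
    intro S hc h0 hS
    have st := straddle1 (fun i hi => hmono i (by omega)) hchain
      (fun i hi x y h => (hlow i hi x y h).1) hS h0
    have hst : ∀ i, i + 1 < r → ∀ x y, R i x y → x ∈ S → ∀ j, j ≤ r → x ≤ b j → b j ≤ y →
        False := by
      intro i hi x y h hx j hj h1 h2
      rcases eq_or_lt_of_le hj with e | hj
      · have := (hlow i hi x y h).2
        subst e; omega
      · exact st j hj i hi x y h hx h1 h2
    refine transfer hM hM' hag hS ?_ hst
    intro j hj hbj
    rcases Nat.eq_zero_or_pos j with e | h0j
    · exact h0 (e ▸ hbj)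
    rcases eq_or_lt_of_le hj with e | hj'
    · exact h0 (hc.2 (e ▸ hbj))
    · obtain ⟨k, rfl⟩ : ∃ k, j = k + 1 := ⟨j - 1, by omega⟩
      obtain ⟨a, ha, hab⟩ := hchain k hj'
      exact hst k hj' _ _ ha ((hS.1 k hj' _ _ ha).2 hbj) (k + 1) hj
        ((hM k hj').lt ha).le le_rfl
  have key2 : ∀ S : Set ℕ, (b 0 ∈ S ↔ b r ∈ S) → b 0 ∉ S → ClosedS r R' S → ClosedS r R S := by
    intro S hc h0 hS
    have hr' : b r ∉ S := fun h => h0 (hc.2 h)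
    have st := straddle2 hmono hchain'
      (fun i hi x y h => (hhigh i hi x y h).2) hS hr'
    have hst : ∀ i, i + 1 < r → ∀ x y, R' i x y → x ∈ S → ∀ j, j ≤ r → x ≤ b j → b j ≤ y →
        False := by
      intro i hi x y h hx j hj h1 h2
      rcases Nat.eq_zero_or_pos j with e | hj0
      · have := (hhigh i hi x y h).1
        subst e; omega
      · exact st (r - j) j (by omega) hj0 i hi x y h hx h1 h2
    refine transfer hM' hM (fun v hv i hi => (hag v hv i hi).symm) hS ?_ hst
    intro j hj hbj
    rcases Nat.eq_zero_or_pos j with e | h0j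
    · exact h0 (e ▸ hbj)
    rcases eq_or_lt_of_le hj with e | hj'
    · exact h0 (hc.2 (e ▸ hbj))
    · obtain ⟨k, rfl⟩ : ∃ k, j = k + 1 := ⟨j - 1, by omega⟩
      obtain ⟨a, ha, hab⟩ := hchain' k hj'
      exact hst k hj' _ _ ha hbj (k + 1) hj le_rfl ((hM' k hj').lt ha).le
  by_cases h0 : b 0 ∈ S
  · constructor
    · intro h
      have := (key1 Sᶜ (not_congr hSc) (by simpa using h0) h.compl).compl
      simpa using this
    · intro h
      have := (key2 Sᶜ (not_congr hSc) (by simpa using h0) h.compl).compl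
      simpa using this
  · exact ⟨key1 S hSc h0, key2 S hSc h0⟩

/-! ### Rectangular tableaux and the greedy matching -/

namespace IsRectSYT

variable {r c : ℕ} {T : ℕ → ℕ → ℕ}

theorem row_le (h : IsRectSYT r c T) {i j k : ℕ} (hi : i < r) (hjk : j ≤ k) (hk : k < c) :
    T i j ≤ T i k := by
  induction k with
  | zero => have : j = 0 := by omega
            subst this; exact le_rfl
  | succ k ih =>
    rcases eq_or_lt_of_le hjk with e | hlt
    · subst e; exact le_rfl
    · exact (ih (by omega) (by omega)).trans (h.1 i k hi hk).le

theorem row_lt (h : IsRectSYT r c T) {i j k : ℕ} (hi : i < r) (hjk : j < k) (hk : k < c) :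
    T i j < T i k :=
  lt_of_lt_of_le (h.1 i j hi (by omega)) (h.row_le hi (by omega) hk)

theorem row_lt_iff (h : IsRectSYT r c T) {i j k : ℕ} (hi : i < r) (hj : j < c) (hk : k < c) :
    T i j < T i k ↔ j < k := by
  constructor
  · intro hlt
    by_contra hn
    have := h.row_le hi (by omega : k ≤ j) hj
    omega
  · intro hlt; exact h.row_lt hi hlt hk

theorem row_le_iff (h : IsRectSYT r c T) {i j k : ℕ} (hi : i < r) (hj : j < c) (hk : k < c) :
    T i j ≤ T i k ↔ j ≤ k := by
  have := h.row_lt_iff hi hk hj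
  omega

theorem row_inj (h : IsRectSYT r c T) {i j k : ℕ} (hi : i < r) (hj : j < c) (hk : k < c)
    (e : T i j = T i k) : j = k := by
  have h1 := h.row_lt_iff hi hj hk
  have h2 := h.row_lt_iff hi hk hj
  omega

theorem inj (h : IsRectSYT r c T) {i j i' j' : ℕ} (hi : i < r) (hj : j < c) (hi' : i' < r)
    (hj' : j' < c) (e : T i j = T i' j') : i = i' ∧ j = j' := by
  have key := Finset.inj_on_of_surj_on_of_card_le
    (s := Finset.range r ×ˢ Finset.range c) (t := Finset.Icc 1 (r * c))
    (fun p _ => T p.1 p.2)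
    (by
      rintro ⟨a, b⟩ hab
      simp only [Finset.mem_product, Finset.mem_range] at hab
      exact Finset.mem_Icc.2 (h.2.2.1 a b hab.1 hab.2))
    (by
      intro v hv
      obtain ⟨h1, h2⟩ := Finset.mem_Icc.1 hv
      obtain ⟨a, b, ha, hb, hab⟩ := h.2.2.2 v h1 h2
      exact ⟨(a, b), by simp [ha, hb], hab⟩)
    (by simp)
  have := key (a₁ := (i, j)) (by simp [hi, hj]) (a₂ := (i', j')) (by simp [hi', hj']) e
  simpa using this

end IsRectSYT

theorem foldr_max_ge (l : List ℕ) : ∀ x ∈ l, x ≤ l.foldr max 0 := by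
  induction l with
  | nil => simp
  | cons a l ih =>
    intro x hx
    rcases List.mem_cons.1 hx with e | hx
    · subst e; simp
    · have := ih x hx
      simp only [List.foldr_cons]
      omega

theorem foldr_max_mem (l : List ℕ) (hl : l ≠ []) : l.foldr max 0 ∈ l := by
  induction l with
  | nil => simp at hl
  | cons a l ih =>
    simp only [List.foldr_cons]
    by_cases h : l = []
    · subst h; simp
    · rcases max_choice a (l.foldr max 0) with e | e
      · rw [e]; simp
      · rw [e]; exact List.mem_cons_of_mem _ (ih h)

theorem partnerList_length (c : ℕ) (T : ℕ → ℕ → ℕ) (i j : ℕ) :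
    (partnerList c T i j).length = j := by
  induction j with
  | zero => rfl
  | succ j ih => simp [partnerList, ih]

theorem partnerCol_eq (c : ℕ) (T : ℕ → ℕ → ℕ) (i j : ℕ) :
    partnerCol c T i j = ((List.range c).filter
      (fun j' => decide (T i j' ≤ T (i + 1) j ∧ j' ∉ partnerList c T i j))).foldr max 0 := by
  have := partnerList_length c T i j
  rw [partnerCol, partnerList, List.getD_append_right _ _ _ _ (by omega)]
  simp [this]

theorem partnerList_eq (c : ℕ) (T : ℕ → ℕ → ℕ) (i j : ℕ) :
    partnerList c T i j = (List.range j).map (partnerCol c T i) := by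
  induction j with
  | zero => rfl
  | succ j ih =>
    rw [List.range_succ, List.map_append, ← ih]
    simp only [List.map_cons, List.map_nil]
    rw [partnerCol_eq, partnerList]

section Greedy

variable {r c : ℕ} {T : ℕ → ℕ → ℕ}

theorem partner_spec (h : IsRectSYT r c T) {i j : ℕ} (hi : i + 1 < r) (hj : j < c) :
    partnerCol c T i j < c ∧ T i (partnerCol c T i j) < T (i + 1) j ∧
    (∀ k, k < j → partnerCol c T i k ≠ partnerCol c T i j) ∧
    (∀ j', j' < c → T i j' < T (i + 1) j → (∀ k, k < j → partnerCol c T i k ≠ j') →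
      j' ≤ partnerCol c T i j) := by
  set l := ((List.range c).filter
      (fun j' => decide (T i j' ≤ T (i + 1) j ∧ j' ∉ partnerList c T i j))) with hl
  have hmem : ∀ j', j' ∈ l ↔ j' < c ∧ T i j' ≤ T (i + 1) j ∧
      ∀ k, k < j → partnerCol c T i k ≠ j' := by
    intro j'
    rw [hl, partnerList_eq]
    simp
  have hne : l ≠ [] := by
    have hex : ∃ m ∈ Finset.range (j + 1), m ∉ (Finset.range j).image (partnerCol c T i) := by
      by_contra hcon
      push Not at hcon
      have h1 := Finset.card_le_card hcon
      have h2 := Finset.card_image_le (s := Finset.range j) (f := partnerCol c T i)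
      simp only [Finset.card_range] at h1 h2
      omega
    obtain ⟨m, hm, hm2⟩ := hex
    simp only [Finset.mem_range] at hm
    have : m ∈ l := by
      rw [hmem]
      refine ⟨by omega, ?_, ?_⟩
      · exact (h.row_le (by omega) (by omega : m ≤ j) hj).trans (h.2.1 i j hi hj).le
      · intro k hk e
        exact hm2 (Finset.mem_image.2 ⟨k, Finset.mem_range.2 hk, e⟩)
    exact List.ne_nil_of_mem this
  have h1 : partnerCol c T i j ∈ l := by
    rw [partnerCol_eq]; exact foldr_max_mem l hne
  have h2 : ∀ x ∈ l, x ≤ partnerCol c T i j := by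
    rw [partnerCol_eq]; exact foldr_max_ge l
  obtain ⟨a1, a2, a3⟩ := (hmem _).1 h1
  refine ⟨a1, ?_, a3, ?_⟩
  · refine lt_of_le_of_ne a2 (fun e => ?_)
    have := (h.inj (by omega) a1 hi hj e).1
    omega
  · intro j' b1 b2 b3
    exact h2 j' ((hmem j').2 ⟨b1, b2.le, b3⟩)

theorem partner_inj (h : IsRectSYT r c T) {i j k : ℕ} (hi : i + 1 < r) (hj : j < c) (hk : k < c)
    (e : partnerCol c T i j = partnerCol c T i k) : j = k := by
  rcases lt_trichotomy j k with hlt | hlt | hlt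
  · exact ((partner_spec h hi hk).2.2.1 j hlt e).elim
  · exact hlt
  · exact ((partner_spec h hi hj).2.2.1 k hlt e.symm).elim

theorem partner_surj (h : IsRectSYT r c T) {i j : ℕ} (hi : i + 1 < r) (hj : j < c) :
    ∃ k, k < c ∧ partnerCol c T i k = j := by
  have := Finset.surj_on_of_inj_on_of_card_le (s := Finset.range c) (t := Finset.range c)
    (fun a _ => partnerCol c T i a)
    (fun a ha => Finset.mem_range.2 (partner_spec h hi (Finset.mem_range.1 ha)).1)
    (fun a b ha hb e => partner_inj h hi (Finset.mem_range.1 ha) (Finset.mem_range.1 hb) e)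
    le_rfl j (Finset.mem_range.2 hj)
  obtain ⟨k, hk, e⟩ := this
  exact ⟨k, Finset.mem_range.1 hk, e.symm⟩

/-- Noncrossing property in columns. -/
theorem partner_nc (h : IsRectSYT r c T) {i j k : ℕ} (hi : i + 1 < r) (hj : j < c) (hk : k < c)
    (hjk : j < k) (h1 : partnerCol c T i j < partnerCol c T i k)
    (h2 : T i (partnerCol c T i k) < T (i + 1) j) : False := by
  have := (partner_spec h hi hj).2.2.2 (partnerCol c T i k) (partner_spec h hi hk).1 h2
    (fun m hm => (partner_spec h hi hk).2.2.1 m (by omega))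
  omega

/-- `v` lies in row `i`. -/
def InRow (c : ℕ) (T : ℕ → ℕ → ℕ) (i v : ℕ) : Prop := ∃ j, j < c ∧ T i j = v

/-- arcs between rows `i` and `i+1`. -/
def Arc (c : ℕ) (T : ℕ → ℕ → ℕ) (i x y : ℕ) : Prop :=
  ∃ j, j < c ∧ T i (partnerCol c T i j) = x ∧ T (i + 1) j = y

theorem arc_match (h : IsRectSYT r c T) {i : ℕ} (hi : i + 1 < r) :
    IsMatch (InRow c T i) (InRow c T (i + 1)) (Arc c T i) where
  left := by
    rintro x y ⟨j, hj, rfl, rfl⟩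
    exact ⟨_, (partner_spec h hi hj).1, rfl⟩
  right := by
    rintro x y ⟨j, hj, rfl, rfl⟩
    exact ⟨_, hj, rfl⟩
  lt := by
    rintro x y ⟨j, hj, rfl, rfl⟩
    exact (partner_spec h hi hj).2.1
  exL := by
    rintro x ⟨j, hj, rfl⟩
    obtain ⟨k, hk, e⟩ := partner_surj h hi hj
    exact ⟨_, k, hk, by rw [e], rfl⟩
  exR := by
    rintro x ⟨j, hj, rfl⟩
    exact ⟨_, j, hj, rfl, rfl⟩
  uniqL := by
    rintro x y z ⟨j, hj, rfl, rfl⟩ ⟨k, hk, e, rfl⟩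
    have := h.row_inj (by omega) (partner_spec h hi hk).1 (partner_spec h hi hj).1 e
    rw [partner_inj h hi hk hj this]
  uniqR := by
    rintro x y z ⟨j, hj, rfl, rfl⟩ ⟨k, hk, rfl, e⟩
    rw [h.row_inj hi hk hj e]
  nc := by
    rintro x y x' y' ⟨j, hj, rfl, rfl⟩ ⟨k, hk, rfl, rfl⟩ h1 h2 h3
    rw [h.row_lt_iff hi hj hk] at h3
    rw [h.row_lt_iff (by omega) (partner_spec h hi hj).1 (partner_spec h hi hk).1] at h1
    exact partner_nc h hi hj hk h3 h1 h2

theorem partner_le (h : IsRectSYT r c T) {i s e : ℕ} (hi : i + 1 < r) (he : e < c)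
    (h1 : ∀ k, s ≤ k → k < e → T i (k + 1) < T (i + 1) k)
    (h2 : e + 1 < c → T (i + 1) e < T i (e + 1)) : partnerCol c T i e ≤ s := by
  by_contra hlt
  push Not at hlt
  obtain ⟨a1, a2, a3, -⟩ := partner_spec h hi he
  set k := partnerCol c T i e with hk
  have hle : ∀ m, m < c → T i m < T (i + 1) e → m ≤ e := by
    intro m hm hlt
    by_contra hme
    have x1 := h2 (by omega)
    have x2 := h.row_le (by omega : i < r) (by omega : e + 1 ≤ m) hm
    omega
  have hke := hle k a1 a2
  have hinj := Finset.card_le_card_of_injOn (s := Finset.Icc (k - 1) e) (t := Finset.Icc k e)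
    (partnerCol c T i)
    (by
      intro j hj
      simp only [Finset.coe_Icc, Set.mem_Icc] at hj ⊢
      have hjc : j < c := by omega
      obtain ⟨b1, b2, b3, -⟩ := partner_spec h hi hjc
      refine ⟨?_, hle _ b1 (b2.trans_le (h.row_le hi hj.2 he))⟩
      by_contra hn
      push Not at hn
      have hje : j < e := by
        rcases eq_or_lt_of_le hj.2 with e' | h'
        · subst e'; omega
        · exact h'
      have x1 := h1 (k - 1) (by omega) (by omega)
      rw [show k - 1 + 1 = k by omega] at x1
      have x2 := h.row_le hi hj.1 hjc
      exact partner_nc h hi hjc he hje (hk ▸ hn) (by rw [← hk]; omega))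
    (by
      intro a ha b hb hab
      simp only [Finset.coe_Icc, Set.mem_Icc] at ha hb
      exact partner_inj h hi (by omega) (by omega) hab)
  simp only [Nat.card_Icc] at hinj
  omega

theorem le_partner (h : IsRectSYT r c T) {i s e j : ℕ} (hi : i + 1 < r) (he : e < c)
    (_hse : s ≤ e)
    (h1 : ∀ k, s ≤ k → k < e → T i (k + 1) < T (i + 1) k)
    (h2 : ∀ k, k < s → T (i + 1) k < T i s)
    (hj : j < c) (hjs : partnerCol c T i j = s) : e ≤ j := by
  by_contra hlt
  push Not at hlt
  have hQ : ∀ m : ℕ, ∃ k, m < c → k < c ∧ partnerCol c T i k = m := by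
    intro m
    by_cases hm : m < c
    · obtain ⟨k, hk⟩ := partner_surj h hi hm
      exact ⟨k, fun _ => hk⟩
    · exact ⟨0, fun h => (hm h).elim⟩
  choose Q hQ using hQ
  have hsj : s ≤ j := by
    by_contra hn
    have x1 := h2 j (by omega)
    have x2 := (partner_spec h hi hj).2.1
    rw [hjs] at x2
    omega
  have hinj := Finset.card_le_card_of_injOn (s := Finset.Icc s (j + 1)) (t := Finset.Icc s j)
    Q
    (by
      intro m hm
      simp only [Finset.coe_Icc, Set.mem_Icc] at hm ⊢
      obtain ⟨q1, q2⟩ := hQ m (by omega)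
      have x2 := (partner_spec h hi q1).2.1
      rw [q2] at x2
      have x3 := h.row_le (by omega : i < r) hm.1 (by omega)
      constructor
      · by_contra hn
        have x1 := h2 (Q m) (by omega)
        omega
      · by_contra hn
        push Not at hn
        have hms : s ≠ m := by
          intro e
          have := partner_inj h hi hj q1 (by rw [hjs, q2, e])
          omega
        refine partner_nc h hi hj q1 hn (by rw [hjs, q2]; omega) ?_
        rw [q2]
        have x4 := h.row_le (by omega : i < r) hm.2 (by omega)
        have x5 := h1 j hsj hlt
        omega)
    (by
      intro a ha b hb hab
      simp only [Finset.coe_Icc, Set.mem_Icc] at ha hb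
      rw [← (hQ a (by omega)).2, ← (hQ b (by omega)).2, hab])
  simp only [Nat.card_Icc] at hinj
  omega

end Greedy

/-! ### The sliding path and promotion -/

/-- `s i` is the column at which the sliding path enters row `i`; it leaves row `i` in
column `s (i+1)`. -/
structure PathData (r c : ℕ) (T : ℕ → ℕ → ℕ) (s : ℕ → ℕ) : Prop where
  zero : s 0 = 0
  last : s r = c - 1
  mono : ∀ i, i < r → s i ≤ s (i + 1)
  lt : ∀ i, i ≤ r → s i < c
  right : ∀ i, i + 1 < r → ∀ k, s i ≤ k → k < s (i + 1) → T i (k + 1) < T (i + 1) k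
  down : ∀ i, i + 1 < r → s (i + 1) + 1 < c → T (i + 1) (s (i + 1)) < T i (s (i + 1) + 1)

section Path

variable {r c : ℕ} {T : ℕ → ℕ → ℕ}

theorem exists_pathData (hr : 0 < r) (hc : 0 < c) (h : IsRectSYT r c T) :
    ∃ s, PathData r c T s := by
  have step : ∀ i a : ℕ, ∃ e, i + 1 < r → a < c → a ≤ e ∧ e < c ∧
      (∀ k, a ≤ k → k < e → T i (k + 1) < T (i + 1) k) ∧
      (e + 1 < c → T (i + 1) e < T i (e + 1)) := by
    intro i a
    by_cases hi : i + 1 < r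
    swap
    · exact ⟨0, fun h => (hi h).elim⟩
    by_cases ha : a < c
    swap
    · exact ⟨0, fun _ h => (ha h).elim⟩
    have hex : ∃ e, a ≤ e ∧ (e + 1 < c → T (i + 1) e < T i (e + 1)) :=
      ⟨c - 1, by omega, fun h => by omega⟩
    classical
    refine ⟨Nat.find hex, fun _ _ => ⟨(Nat.find_spec hex).1, ?_, ?_, (Nat.find_spec hex).2⟩⟩
    · have := Nat.find_min' hex (m := c - 1) ⟨by omega, fun h => by omega⟩
      omega
    · intro k hk1 hk2
      have := Nat.find_min hex hk2
      push Not at this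
      obtain ⟨h1, h2⟩ := this hk1
      refine lt_of_le_of_ne h2 (fun e => ?_)
      have := (h.inj (by omega) h1 hi (by omega) e).1
      omega
  choose f hf using step
  let s0 : ℕ → ℕ := fun n => Nat.rec 0 (fun i a => f i a) n
  have s0s : ∀ i, s0 (i + 1) = f i (s0 i) := fun i => rfl
  have s0lt : ∀ i, i < r → s0 i < c := by
    intro i
    induction i with
    | zero => intro _; exact hc
    | succ i ih =>
      intro hi
      rw [s0s]
      exact (hf i (s0 i) hi (ih (by omega))).2.1
  refine ⟨fun i => if i = r then c - 1 else s0 i, ?_, ?_, ?_, ?_, ?_, ?_⟩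
  · simp only [if_neg hr.ne]; rfl
  · simp
  · intro i hi
    simp only [if_neg hi.ne]
    have := s0lt i hi
    split_ifs with h1
    · omega
    · rw [s0s]; exact (hf i (s0 i) (by omega) this).1
  · intro i hi
    split_ifs with h1
    · omega
    · exact s0lt i (by omega)
  · intro i hi
    simp only [if_neg (by omega : i ≠ r), if_neg (by omega : i + 1 ≠ r)]
    exact (hf i (s0 i) hi (s0lt i (by omega))).2.2.1
  · intro i hi
    simp only [if_neg (by omega : i + 1 ≠ r)]
    exact (hf i (s0 i) hi (s0lt i (by omega))).2.2.2

variable {s : ℕ → ℕ}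

/-- a box is on the sliding path -/
def OnPath (r : ℕ) (s : ℕ → ℕ) (p : ℕ × ℕ) : Prop :=
  p.1 < r ∧ s p.1 ≤ p.2 ∧ p.2 ≤ s (p.1 + 1)

theorem slideNext_right (hs : PathData r c T s) {i j : ℕ} (hi : i < r) (h1 : s i ≤ j)
    (h2 : j < s (i + 1)) : slideNext r c T (i, j) = (i, j + 1) := by
  have hc := hs.lt (i + 1) hi
  unfold slideNext
  by_cases hi' : i + 1 < r
  · have := hs.right i hi' j h1 h2
    simp only
    rw [if_pos ⟨hi', by omega⟩, if_pos this.le]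
  · simp only
    rw [if_neg (by omega), if_pos (by omega)]

theorem slideNext_down (hs : PathData r c T s) {i : ℕ} (hi : i + 1 < r) :
    slideNext r c T (i, s (i + 1)) = (i + 1, s (i + 1)) := by
  unfold slideNext
  simp only
  by_cases hc : s (i + 1) + 1 < c
  · have := hs.down i hi hc
    rw [if_pos ⟨hi, hc⟩, if_neg (by omega)]
  · rw [if_neg (by omega), if_neg hc, if_pos hi]

theorem slideNext_end (hr : 0 < r) (hc : 0 < c) :
    slideNext r c T (r - 1, c - 1) = (r - 1, c - 1) := by
  unfold slideNext
  simp only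
  rw [if_neg (by omega), if_neg (by omega), if_neg (by omega)]

theorem onPath_slidePath (hr : 0 < r) (hc : 0 < c) (hs : PathData r c T s) (k : ℕ) :
    OnPath r s (slidePath r c T k) ∧
      (slidePath r c T k = (r - 1, c - 1) ∨
        (slidePath r c T k).1 + (slidePath r c T k).2 = k) := by
  induction k with
  | zero =>
    simp only [slidePath]
    refine ⟨⟨hr, ?_, ?_⟩, Or.inr (by simp)⟩
    · simp [hs.zero]
    · simp
  | succ k ih =>
    simp only [slidePath]
    obtain ⟨h1, h2⟩ := ih
    generalize hp : slidePath r c T k = p at h1 h2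
    obtain ⟨i, j⟩ := p
    obtain ⟨a1, a2, a3⟩ := h1
    simp only at a1 a2 a3
    rcases eq_or_lt_of_le a3 with e | hlt
    · by_cases hi : i + 1 < r
      · subst e
        rw [slideNext_down hs hi]
        refine ⟨⟨hi, le_rfl, hs.mono _ hi⟩, Or.inr ?_⟩
        rcases h2 with e | e
        · simp only [Prod.mk.injEq] at e; omega
        · simp only at e ⊢; omega
      · have : i = r - 1 := by omega
        subst this
        rw [show r - 1 + 1 = r by omega, hs.last] at e
        subst e
        rw [slideNext_end hr hc]
        exact ⟨⟨a1, a2, a3⟩, Or.inl rfl⟩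
    · rw [slideNext_right hs a1 a2 hlt]
      refine ⟨⟨a1, by simp only; omega, by simp only; omega⟩, Or.inr ?_⟩
      rcases h2 with e | e
      · simp only [Prod.mk.injEq] at e
        have := hs.last
        rw [show i + 1 = r by omega] at hlt
        omega
      · simp only at e ⊢; omega

theorem slidePath_final (hr : 0 < r) (hc : 0 < c) (hs : PathData r c T s) :
    slidePath r c T (r + c) = (r - 1, c - 1) := by
  obtain ⟨⟨h1, h2, h3⟩, h4⟩ := onPath_slidePath hr hc hs (r + c)
  rcases h4 with e | e
  · exact e
  · have := hs.lt ((slidePath r c T (r + c)).1 + 1) h1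
    omega

theorem slidePath_reach (hs : PathData r c T s) : ∀ i, i < r → ∀ d, s i + d ≤ s (i + 1) →
    ∃ k, slidePath r c T k = (i, s i + d) := by
  have row : ∀ i, i < r → (∃ k, slidePath r c T k = (i, s i)) → ∀ d, s i + d ≤ s (i + 1) →
      ∃ k, slidePath r c T k = (i, s i + d) := by
    intro i hi h0 d
    induction d with
    | zero => intro _; exact h0
    | succ d ih =>
      intro hd
      obtain ⟨k, hk⟩ := ih (by omega)
      refine ⟨k + 1, ?_⟩
      rw [slidePath, hk, slideNext_right hs hi (by omega) (by omega)]
      rfl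
  intro i
  induction i with
  | zero =>
    intro hi
    exact row 0 hi ⟨0, by rw [slidePath, hs.zero]⟩
  | succ i ih =>
    intro hi
    refine row _ hi ?_
    have := hs.mono i (by omega)
    obtain ⟨k, hk⟩ := ih (by omega) (s (i + 1) - s i) (by omega)
    refine ⟨k + 1, ?_⟩
    rw [slidePath, hk, show s i + (s (i + 1) - s i) = s (i + 1) by omega, slideNext_down hs hi]

theorem promote_off (hr : 0 < r) (hc : 0 < c) (hs : PathData r c T s) {i j : ℕ} (hi : i < r)
    (h : j < s i ∨ s (i + 1) < j) : promote r c T i j = T i j - 1 := by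
  have hno : ¬ ∃ k, slidePath r c T k = (i, j) := by
    rintro ⟨k, hk⟩
    have := (onPath_slidePath hr hc hs k).1
    rw [hk] at this
    obtain ⟨-, h1, h2⟩ := this
    simp only at h1 h2
    omega
  unfold promote
  rw [if_neg (fun e => hno ⟨_, e.symm⟩), dif_neg hno]

theorem promote_end (hr : 0 < r) (hc : 0 < c) (hs : PathData r c T s) :
    promote r c T (r - 1) (c - 1) = r * c := by
  unfold promote
  rw [slidePath_final hr hc hs, if_pos rfl]

theorem promote_on (hr : 0 < r) (hc : 0 < c) (hs : PathData r c T s) {i j : ℕ} (hi : i < r)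
    (h1 : s i ≤ j) (h2 : j ≤ s (i + 1)) (hne : (i, j) ≠ (r - 1, c - 1)) :
    promote r c T i j
      = T (slideNext r c T (i, j)).1 (slideNext r c T (i, j)).2 - 1 := by
  have hex : ∃ k, slidePath r c T k = (i, j) := by
    obtain ⟨k, hk⟩ := slidePath_reach hs i hi (j - s i) (by omega)
    exact ⟨k, by rw [hk, show s i + (j - s i) = j by omega]⟩
  unfold promote
  rw [slidePath_final hr hc hs, if_neg hne, dif_pos hex]
  rw [slidePath, Nat.find_spec hex]

theorem promote_right (hr : 0 < r) (hc : 0 < c) (hs : PathData r c T s) {i j : ℕ} (hi : i < r)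
    (h1 : s i ≤ j) (h2 : j < s (i + 1)) : promote r c T i j = T i (j + 1) - 1 := by
  rw [promote_on hr hc hs hi h1 h2.le ?_, slideNext_right hs hi h1 h2]
  intro e
  simp only [Prod.mk.injEq] at e
  have := hs.lt (i + 1) hi
  omega

theorem promote_down (hr : 0 < r) (hc : 0 < c) (hs : PathData r c T s) {i : ℕ} (hi : i + 1 < r) :
    promote r c T i (s (i + 1)) = T (i + 1) (s (i + 1)) - 1 := by
  rw [promote_on hr hc hs (by omega) (hs.mono i (by omega)) le_rfl ?_, slideNext_down hs hi]
  intro e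
  simp only [Prod.mk.injEq] at e
  omega

/-- `b i` : the entries moving up along the path. -/
def bSeq (r c : ℕ) (T : ℕ → ℕ → ℕ) (s : ℕ → ℕ) (i : ℕ) : ℕ :=
  if i = r then r * c + 1 else T i (s i)

theorem promote_b (hr : 0 < r) (hc : 0 < c) (hs : PathData r c T s) {i : ℕ} (hi : i < r) :
    promote r c T i (s (i + 1)) = bSeq r c T s (i + 1) - 1 := by
  unfold bSeq
  split_ifs with h
  · have h' : i = r - 1 := by omega
    rw [h, hs.last, h', promote_end hr hc hs]
    omega
  · exact promote_down hr hc hs (by omega)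

theorem T_zero (hr : 0 < r) (hc : 0 < c) (h : IsRectSYT r c T) : T 0 0 = 1 := by
  have hcol : ∀ i j, i < r → j < c → T 0 j ≤ T i j := by
    intro i
    induction i with
    | zero => intros; exact le_rfl
    | succ i ih =>
      intro j hi hj
      exact (ih j (by omega) hj).trans (h.2.1 i j hi hj).le
  have hpos : 1 ≤ r * c := Nat.mul_pos hr hc
  obtain ⟨i, j, hi, hj, e⟩ := h.2.2.2 1 le_rfl hpos
  have h1 := hcol i j hi hj
  have h2 := h.row_le hr (Nat.zero_le j) hj
  have h3 := (h.2.2.1 0 0 hr hc).1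
  omega

theorem bSeq_lt (h : IsRectSYT r c T) (hs : PathData r c T s) {i : ℕ} (hi : i < r) :
    bSeq r c T s i < bSeq r c T s (i + 1) := by
  have h1 := hs.lt i hi.le
  unfold bSeq
  rw [if_neg hi.ne]
  split_ifs with h2
  · have := (h.2.2.1 i (s i) hi h1).2
    omega
  · have h3 := hs.lt (i + 1) hi
    have h4 := h.row_le hi (hs.mono i hi) h3
    have h5 := h.2.1 i (s (i + 1)) (by omega) h3
    omega

theorem bSeq_le (h : IsRectSYT r c T) (hs : PathData r c T s) {i : ℕ} (hi : i ≤ r) :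
    1 ≤ bSeq r c T s i ∧ bSeq r c T s i ≤ r * c + 1 := by
  unfold bSeq
  split_ifs with h2
  · omega
  · have := (h.2.2.1 i (s i) (by omega) (hs.lt i hi))
    omega

/-- Trichotomy formula for promotion. -/
theorem promote_cases (hr : 0 < r) (hc : 0 < c) (hs : PathData r c T s) {i j : ℕ} (hi : i < r) :
    ((j < s i ∨ s (i + 1) < j) ∧ promote r c T i j = T i j - 1) ∨
    (s i ≤ j ∧ j < s (i + 1) ∧ promote r c T i j = T i (j + 1) - 1) ∨
    (j = s (i + 1) ∧ promote r c T i j = bSeq r c T s (i + 1) - 1) := by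
  by_cases h1 : j < s i ∨ s (i + 1) < j
  · exact Or.inl ⟨h1, promote_off hr hc hs hi h1⟩
  · rcases eq_or_lt_of_le (show j ≤ s (i + 1) by omega) with e | hlt
    · right; right
      refine ⟨e, ?_⟩
      rw [e]; exact promote_b hr hc hs hi
    · right; left
      exact ⟨by omega, hlt, promote_right hr hc hs hi (by omega) hlt⟩

theorem T_two (hr : 0 < r) (hc : 0 < c) (h : IsRectSYT r c T) {i j : ℕ} (hi : i < r) (hj : j < c)
    (hne : i ≠ 0 ∨ j ≠ 0) : 2 ≤ T i j := by
  have h0 := T_zero hr hc h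
  have h1 := (h.2.2.1 i j hi hj).1
  by_contra hn
  have := h.inj hi hj hr hc (show T i j = T 0 0 by omega)
  omega

theorem promote_syt (hr : 0 < r) (hc : 0 < c) (h : IsRectSYT r c T) (hs : PathData r c T s) :
    IsRectSYT r c (promote r c T) := by
  have hb1 : ∀ i, i < r → 2 ≤ bSeq r c T s (i + 1) := by
    intro i hi
    have h1 := bSeq_lt h hs hi
    have h2 := (bSeq_le h hs hi.le).1
    omega
  have hz := hs.zero
  -- value bounds
  have hlo : ∀ i j, i < r → j < s i → 2 ≤ T i j := by
    intro i j hi hj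
    have := hs.lt i hi.le
    refine T_two hr hc h hi (by omega) ?_
    by_contra hn
    push Not at hn
    rw [hn.1] at hj
    omega
  have hbound : ∀ i j, i < r → j < c → 1 ≤ promote r c T i j ∧ promote r c T i j ≤ r * c := by
    intro i j hi hj
    have hs1 := hs.lt (i + 1) hi
    rcases promote_cases hr hc hs (j := j) hi with ⟨h1, e⟩ | ⟨h1, h2, e⟩ | ⟨h1, e⟩
    · rw [e]
      have a := (h.2.2.1 i j hi hj).2
      rcases h1 with h1 | h1
      · have := hlo i j hi h1
        omega
      · have := T_two hr hc h hi hj (by omega)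
        omega
    · rw [e]
      have a := (h.2.2.1 i (j + 1) hi (by omega)).2
      have := T_two hr hc h hi (show j + 1 < c by omega) (by omega)
      omega
    · rw [e]
      have := hb1 i hi
      have := (bSeq_le h hs (show i + 1 ≤ r by omega)).2
      omega
  -- comparison of `b (i+1)` with row `i`
  have hbr : ∀ i, i < r → T i (s (i + 1)) < bSeq r c T s (i + 1) ∧
      (s (i + 1) + 1 < c → bSeq r c T s (i + 1) < T i (s (i + 1) + 1)) := by
    intro i hi
    have hs1 := hs.lt (i + 1) hi
    unfold bSeq
    split_ifs with hir
    · have := (h.2.2.1 i (s (i + 1)) hi hs1).2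
      refine ⟨by omega, ?_⟩
      intro hc2
      rw [hir, hs.last] at hc2
      omega
    · exact ⟨h.2.1 i _ (by omega) hs1, hs.down i (by omega)⟩
  refine ⟨?_, ?_, hbound, ?_⟩
  · -- rows
    intro i j hi hj
    have hs1 := hs.lt (i + 1) hi
    have hm := hs.mono i hi
    have p1 := (hbound i j hi (by omega)).1
    have p2 := (hbound i (j + 1) hi hj).1
    have q1 := h.1 i j hi hj
    obtain ⟨b1, b2⟩ := hbr i hi
    rcases promote_cases hr hc hs (j := j) hi with ⟨h1, e⟩ | ⟨h1, h2, e⟩ | ⟨h1, e⟩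
    · rcases promote_cases hr hc hs (j := j + 1) hi with ⟨h1', e'⟩ | ⟨h1', h2', e'⟩ | ⟨h1', e'⟩
      · omega
      · have := h.1 i (j + 1) hi (by omega)
        omega
      · rw [← h1'] at b1
        omega
    · rcases promote_cases hr hc hs (j := j + 1) hi with ⟨h1', e'⟩ | ⟨h1', h2', e'⟩ | ⟨h1', e'⟩
      · omega
      · have := h.1 i (j + 1) hi (by omega)
        omega
      · rw [← h1'] at b1
        omega
    · rcases promote_cases hr hc hs (j := j + 1) hi with ⟨h1', e'⟩ | ⟨h1', h2', e'⟩ | ⟨h1', e'⟩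
      · have := b2 (by omega)
        rw [← h1] at this
        omega
      · omega
      · omega
  · -- columns
    intro i j hi hj
    have hi0 : i < r := by omega
    have hs1 := hs.lt (i + 1) hi0
    have hs2 := hs.lt (i + 1 + 1) hi
    have hm := hs.mono i hi0
    have hm2 := hs.mono (i + 1) hi
    have p1 := (hbound i j hi0 hj).1
    have p2 := (hbound (i + 1) j hi hj).1
    have q1 := h.2.1 i j hi hj
    obtain ⟨b1, b2⟩ := hbr (i + 1) hi
    have hbs : bSeq r c T s (i + 1) = T (i + 1) (s (i + 1)) := by
      unfold bSeq; rw [if_neg (by omega)]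
    rcases promote_cases hr hc hs (j := j) hi0 with ⟨h1, e⟩ | ⟨h1, h2, e⟩ | ⟨h1, e⟩
    · rcases promote_cases hr hc hs (j := j) hi with ⟨h1', e'⟩ | ⟨h1', h2', e'⟩ | ⟨h1', e'⟩
      · omega
      · have := h.1 (i + 1) j hi (by omega)
        omega
      · rw [← h1'] at b1
        omega
    · rcases promote_cases hr hc hs (j := j) hi with ⟨h1', e'⟩ | ⟨h1', h2', e'⟩ | ⟨h1', e'⟩
      · have := hs.right i hi j h1 h2
        omega
      · omega
      · omega
    · rw [hbs, ← h1] at e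
      rcases promote_cases hr hc hs (j := j) hi with ⟨h1', e'⟩ | ⟨h1', h2', e'⟩ | ⟨h1', e'⟩
      · omega
      · have := h.1 (i + 1) j hi (by omega)
        omega
      · rw [← h1'] at b1
        omega
  · -- surjectivity
    intro v hv1 hv2
    rcases eq_or_lt_of_le hv2 with e | hlt
    · exact ⟨r - 1, c - 1, by omega, by omega, by rw [promote_end hr hc hs, e]⟩
    · obtain ⟨i, j, hi, hj, e⟩ := h.2.2.2 (v + 1) (by omega) hlt
      by_cases h1 : j < s i ∨ s (i + 1) < j
      · exact ⟨i, j, hi, hj, by rw [promote_off hr hc hs hi h1]; omega⟩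
      · by_cases h2 : j = s i
        · have hi0 : i ≠ 0 := by
            intro hi0
            rw [hi0, hz] at h2
            rw [hi0, h2, T_zero hr hc h] at e
            omega
          obtain ⟨k, rfl⟩ : ∃ k, i = k + 1 := ⟨i - 1, by omega⟩
          refine ⟨k, s (k + 1), by omega, by omega, ?_⟩
          rw [promote_down hr hc hs hi, ← h2]
          omega
        · refine ⟨i, j - 1, hi, by omega, ?_⟩
          rw [promote_right hr hc hs hi (by omega) (by omega), show j - 1 + 1 = j by omega]
          omega

theorem inRow_promote (hr : 0 < r) (hc : 0 < c) (h : IsRectSYT r c T) (hs : PathData r c T s)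
    {i v : ℕ} (hi : i < r) (hv : ∀ j, j ≤ r → v ≠ bSeq r c T s j) :
    InRow c T i v ↔ InRow c (promote r c T) i (v - 1) := by
  have hP := promote_syt hr hc h hs
  constructor
  · rintro ⟨j, hj, rfl⟩
    have hjs : j ≠ s i := by
      intro e
      apply hv i hi.le
      unfold bSeq
      rw [if_neg hi.ne, e]
    by_cases h1 : j < s i ∨ s (i + 1) < j
    · exact ⟨j, hj, promote_off hr hc hs hi h1⟩
    · refine ⟨j - 1, by omega, ?_⟩
      rw [promote_right hr hc hs hi (by omega) (by omega), show j - 1 + 1 = j by omega]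
  · rintro ⟨j, hj, e0⟩
    have hb := (hP.2.2.1 i j hi hj).1
    rcases promote_cases hr hc hs (j := j) hi with ⟨h1, e⟩ | ⟨h1, h2, e⟩ | ⟨h1, e⟩
    · exact ⟨j, hj, by omega⟩
    · have := hs.lt (i + 1) hi
      exact ⟨j + 1, by omega, by omega⟩
    · exact (hv (i + 1) hi (by omega)).elim

/-- Closed vertex sets of `T` and of its promotion correspond. -/
theorem closed_promote (hr : 1 < r) (hc : 0 < c) (h : IsRectSYT r c T) {S : Set ℕ}
    (hS : 1 ∈ S ↔ r * c + 1 ∈ S) :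
    ClosedS r (Arc c T) S ↔ ClosedS r (Arc c (promote r c T)) {v | v + 1 ∈ S} := by
  have hr0 : 0 < r := by omega
  obtain ⟨s, hs⟩ := exists_pathData hr0 hc h
  have hP := promote_syt hr0 hc h hs
  have hb0 : bSeq r c T s 0 = 1 := by
    unfold bSeq; rw [if_neg (by omega), hs.zero, T_zero hr0 hc h]
  have hbr : bSeq r c T s r = r * c + 1 := by
    unfold bSeq; rw [if_pos rfl]
  have hge : ∀ i, i + 1 < r → ∀ x y, Arc c (promote r c T) i x y → 1 ≤ x ∧ y ≤ r * c := by
    rintro i hi x y ⟨j, hj, rfl, rfl⟩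
    exact ⟨(hP.2.2.1 _ _ (by omega) (partner_spec hP hi hj).1).1, (hP.2.2.1 _ _ hi hj).2⟩
  have key := closed_iff (r := r) hr (W := InRow c T)
    (W' := fun i v => InRow c (promote r c T) i (v - 1)) (R := Arc c T)
    (R' := fun i x y => Arc c (promote r c T) i (x - 1) (y - 1)) (b := bSeq r c T s) (S := S)
    (fun i hi => arc_match h hi)
    (fun i hi => by
      have m := arc_match hP hi
      exact
      { left := fun hR => m.left hR
        right := fun hR => m.right hR
        lt := fun hR => by have := m.lt hR; omega
        exL := fun {x} hx => by
          obtain ⟨y, hy⟩ := m.exL hx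
          exact ⟨y + 1, by simpa using hy⟩
        exR := fun {x} hx => by
          obtain ⟨y, hy⟩ := m.exR hx
          exact ⟨y + 1, by simpa using hy⟩
        uniqL := fun {x y z} h1 h2 => by
          have := m.uniqL h1 h2
          have := m.lt h1
          have := m.lt h2
          omega
        uniqR := fun {x y z} h1 h2 => by
          have := m.uniqR h1 h2
          have := hge i hi _ _ h1
          have := hge i hi _ _ h2
          omega
        nc := fun {x y x' y'} h1 h2 a1 a2 a3 => by
          have := hge i hi _ _ h1
          have := hge i hi _ _ h2
          exact m.nc h1 h2 (by omega) (by omega) (by omega) })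
    (fun v hv i hi => inRow_promote hr0 hc h hs hi hv)
    (fun i hi => bSeq_lt h hs hi)
    (fun i hi => by
      have he := hs.lt (i + 1) (by omega)
      refine ⟨T i (partnerCol c T i (s (i + 1))), ⟨s (i + 1), he, rfl, ?_⟩, ?_⟩
      · unfold bSeq; rw [if_neg (by omega)]
      · have := partner_le h hi he (hs.right i hi) (hs.down i hi)
        unfold bSeq; rw [if_neg (by omega)]
        exact h.row_le (by omega) this (hs.lt i (by omega)))
    (by
      rintro i hi x y ⟨j, hj, rfl, rfl⟩
      rw [hb0, hbr]
      have := (h.2.2.1 _ _ (by omega : i < r) (partner_spec h hi hj).1).1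
      have := (h.2.2.1 _ _ hi hj).2
      omega)
    (fun i hi => by
      have hi0 : i < r := by omega
      have he := hs.lt (i + 1) (by omega)
      have he2 := hs.lt (i + 1 + 1) (by omega)
      have hm := hs.mono (i + 1) hi
      obtain ⟨j, hj, hjs⟩ := partner_surj hP hi he
      have hle := le_partner hP hi he2 hm
        (by
          intro k hk1 hk2
          rw [promote_right hr0 hc hs hi hk1 hk2, promote_off hr0 hc hs hi0 (by omega)]
          have a := h.2.1 i (k + 1) hi (by omega)
          have a2 := (h.2.2.1 i (k + 1) hi0 (by omega)).1
          omega)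
        (by
          intro k hk
          rw [promote_down hr0 hc hs hi, promote_off hr0 hc hs hi (by omega)]
          have a := h.row_lt hi hk he
          have a2 := (h.2.2.1 (i + 1) k hi (by omega)).1
          omega)
        hj hjs
      refine ⟨promote r c T (i + 1) j + 1, ⟨j, hj, ?_, ?_⟩, ?_⟩
      · rw [hjs, promote_b hr0 hc hs hi0]
      · simp
      · have := hP.row_le hi hle hj
        rw [promote_b hr0 hc hs hi] at this
        omega)
    (by
      intro i hi x y hR
      have := hge i hi _ _ hR
      rw [hb0, hbr]
      omega)
    (by rw [hb0, hbr]; exact hS)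
  rw [key]
  -- unshift
  constructor
  · rintro ⟨k1, k2⟩
    refine ⟨fun i hi x y hR => k1 i hi (x + 1) (y + 1) (by simpa using hR), ?_⟩
    intro i hi i' hi' x y x' y' h1 h2 a1 a2 a3
    exact k2 i hi i' hi' (x + 1) (y + 1) (x' + 1) (y' + 1) (by simpa using h1)
      (by simpa using h2) (by omega) (by omega) (by omega)
  · rintro ⟨k1, k2⟩
    have sh : ∀ i, i + 1 < r → ∀ x y, Arc c (promote r c T) i (x - 1) (y - 1) →
        x - 1 + 1 = x ∧ y - 1 + 1 = y := by
      intro i hi x y hR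
      have := hge i hi _ _ hR
      have := (arc_match hP hi).lt hR
      omega
    refine ⟨fun i hi x y hR => ?_, ?_⟩
    · have := k1 i hi _ _ hR
      obtain ⟨e1, e2⟩ := sh i hi x y hR
      simpa [e1, e2] using this
    · intro i hi i' hi' x y x' y' h1 h2 a1 a2 a3
      obtain ⟨e1, e2⟩ := sh i hi x y h1
      obtain ⟨e3, e4⟩ := sh i' hi' x' y' h2
      have := k2 i hi i' hi' _ _ _ _ h1 h2 (by omega) (by omega) (by omega)
      simpa [e1, e3] using this

end Path

/-! ### Components and closed vertex sets -/

def Cl (M : Finset (ℕ × ℕ)) (S : Finset ℕ) : Prop :=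
  S ⊆ endpoints M ∧ S.Nonempty ∧ (∀ p ∈ M, (p.1 ∈ S ↔ p.2 ∈ S)) ∧
  (∀ p ∈ M, ∀ q ∈ M, p.1 < q.1 → q.1 < p.2 → p.2 < q.2 → (p.1 ∈ S ↔ q.1 ∈ S))

theorem mem_endpoints {C : Finset (ℕ × ℕ)} {v : ℕ} :
    v ∈ endpoints C ↔ ∃ p ∈ C, p.1 = v ∨ p.2 = v := by
  unfold endpoints
  rw [Finset.mem_union, Finset.mem_image, Finset.mem_image]
  constructor
  · rintro (⟨p, hp, e⟩ | ⟨p, hp, e⟩)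
    · exact ⟨p, hp, Or.inl e⟩
    · exact ⟨p, hp, Or.inr e⟩
  · rintro ⟨p, hp, e | e⟩
    · exact Or.inl ⟨p, hp, e⟩
    · exact Or.inr ⟨p, hp, e⟩

theorem pre_mem {M C : Finset (ℕ × ℕ)} (h : IsPreSubdiagram M C) {p : ℕ × ℕ} (hp : p ∈ M) :
    (p.1 ∈ endpoints C ↔ p ∈ C) ∧ (p.2 ∈ endpoints C ↔ p ∈ C) := by
  constructor
  · refine ⟨fun hm => ?_, fun hm => mem_endpoints.2 ⟨p, hm, Or.inl rfl⟩⟩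
    obtain ⟨q, hq, e | e⟩ := mem_endpoints.1 hm
    · exact h.2.2.1 p hp q hq (Or.inl e.symm)
    · exact h.2.2.1 p hp q hq (Or.inr (Or.inl e.symm))
  · refine ⟨fun hm => ?_, fun hm => mem_endpoints.2 ⟨p, hm, Or.inr rfl⟩⟩
    obtain ⟨q, hq, e | e⟩ := mem_endpoints.1 hm
    · exact h.2.2.1 p hp q hq (Or.inr (Or.inr (Or.inl e.symm)))
    · exact h.2.2.1 p hp q hq (Or.inr (Or.inr (Or.inr e.symm)))

theorem endpoints_mono {C D : Finset (ℕ × ℕ)} (h : C ⊆ D) : endpoints C ⊆ endpoints D := by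
  intro v hv
  obtain ⟨p, hp, e⟩ := mem_endpoints.1 hv
  exact mem_endpoints.2 ⟨p, h hp, e⟩

theorem pre_to_cl {M C : Finset (ℕ × ℕ)} (h : IsPreSubdiagram M C) : Cl M (endpoints C) := by
  refine ⟨endpoints_mono h.1, ?_, ?_, ?_⟩
  · obtain ⟨p, hp⟩ := h.2.1
    exact ⟨p.1, mem_endpoints.2 ⟨p, hp, Or.inl rfl⟩⟩
  · intro p hp
    rw [(pre_mem h hp).1, (pre_mem h hp).2]
  · intro p hp q hq h1 h2 h3
    rw [(pre_mem h hp).1, (pre_mem h hq).1]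
    constructor
    · intro hpC
      by_contra hqC
      exact h.2.2.2 q hq hqC p hpC (Or.inr ⟨h1, h2, h3⟩)
    · intro hqC
      by_contra hpC
      exact h.2.2.2 p hp hpC q hqC (Or.inl ⟨h1, h2, h3⟩)

theorem pre_ext {M C D : Finset (ℕ × ℕ)} (hC : IsPreSubdiagram M C) (hD : IsPreSubdiagram M D)
    (h : endpoints C ⊆ endpoints D) : C ⊆ D := by
  intro p hp
  have hpM := hC.1 hp
  exact (pre_mem hD hpM).1.1 (h ((pre_mem hC hpM).1.2 hp))

theorem cl_to_pre {M : Finset (ℕ × ℕ)} {S : Finset ℕ} (h : Cl M S) :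
    ∃ C, IsPreSubdiagram M C ∧ endpoints C = S := by
  obtain ⟨h1, h2, h3, h4⟩ := h
  have he : endpoints (M.filter (fun p => p.1 ∈ S)) = S := by
    ext v
    rw [mem_endpoints]
    constructor
    · rintro ⟨p, hp, e⟩
      rw [Finset.mem_filter] at hp
      rcases e with e | e
      · exact e ▸ hp.2
      · exact e ▸ (h3 p hp.1).1 hp.2
    · intro hv
      obtain ⟨p, hp, e⟩ := mem_endpoints.1 (h1 hv)
      refine ⟨p, Finset.mem_filter.2 ⟨hp, ?_⟩, e⟩
      rcases e with e | e
      · exact e ▸ hv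
      · exact (h3 p hp).2 (e ▸ hv)
  refine ⟨M.filter (fun p => p.1 ∈ S), ⟨Finset.filter_subset _ _, ?_, ?_, ?_⟩, he⟩
  · obtain ⟨v, hv⟩ := h2
    rw [← he] at hv
    obtain ⟨p, hp, -⟩ := mem_endpoints.1 hv
    exact ⟨p, hp⟩
  · intro p hp q hq hsh
    rw [Finset.mem_filter] at hq ⊢
    refine ⟨hp, ?_⟩
    have hq2 := (h3 q hq.1).1 hq.2
    rcases hsh with e | e | e | e
    · rw [e]; exact hq.2
    · rw [e]; exact hq2
    · rw [h3 p hp, e]; exact hq.2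
    · rw [h3 p hp, e]; exact hq2
  · intro p hp hpn q hq hx
    rw [Finset.mem_filter] at hq hpn
    rcases hx with ⟨a, b, d⟩ | ⟨a, b, d⟩
    · exact hpn ⟨hp, (h4 p hp q hq.1 a b d).2 hq.2⟩
    · exact hpn ⟨hp, (h4 q hq.1 p hp a b d).1 hq.2⟩

/-- Minimal closed vertex sets. -/
def AtomS (M : Finset (ℕ × ℕ)) (S : Finset ℕ) : Prop :=
  Cl M S ∧ ∀ S', S' ⊂ S → ¬ Cl M S'

theorem comp_to_atom {M C : Finset (ℕ × ℕ)} (h : IsComponent M C) : AtomS M (endpoints C) := by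
  refine ⟨pre_to_cl h.1, ?_⟩
  intro S' hS' hcl
  obtain ⟨D, hD, rfl⟩ := cl_to_pre hcl
  have hDC := pre_ext hD h.1 hS'.1
  have hss : D ⊂ C := ⟨hDC, fun hCD => hS'.2 (endpoints_mono hCD)⟩
  refine h.2 D hss ⟨hD, ?_⟩
  rintro rfl
  exact hss.2 h.1.1

theorem atom_to_comp {M : Finset (ℕ × ℕ)} {S : Finset ℕ} (h : AtomS M S) :
    ∃ C, IsComponent M C ∧ endpoints C = S := by
  obtain ⟨C, hC, rfl⟩ := cl_to_pre h.1
  refine ⟨C, ⟨hC, ?_⟩, rfl⟩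
  intro D hD hsub
  exact h.2 _ ⟨endpoints_mono hD.1, fun hh => hD.2 (pre_ext hC hsub.1 hh)⟩ (pre_to_cl hsub.1)

theorem ncard_comp (M : Finset (ℕ × ℕ)) :
    {C | IsComponent M C}.ncard = {S | AtomS M S}.ncard := by
  have : {S | AtomS M S} = endpoints '' {C | IsComponent M C} := by
    ext S
    constructor
    · intro h
      obtain ⟨C, hC, e⟩ := atom_to_comp h
      exact ⟨C, hC, e⟩
    · rintro ⟨C, hC, rfl⟩
      exact comp_to_atom hC
  rw [this, Set.ncard_image_of_injOn]
  intro C hC D hD e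
  exact Finset.Subset.antisymm (pre_ext hC.1 hD.1 (by rw [e])) (pre_ext hD.1 hC.1 (by rw [e]))

theorem image_pull {V S S'' : Finset ℕ} {f : ℕ → ℕ} (hf : Set.BijOn f V V) (h : S'' ⊆ V) :
    ∃ S, S ⊆ V ∧ S.image f = S'' := by
  refine ⟨V.filter (fun x => f x ∈ S''), Finset.filter_subset _ _, ?_⟩
  ext v
  simp only [Finset.mem_image, Finset.mem_filter]
  constructor
  · rintro ⟨x, ⟨-, hx⟩, rfl⟩; exact hx
  · intro hv
    obtain ⟨x, hx, e⟩ := hf.2.2 (h hv)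
    exact ⟨x, ⟨hx, e ▸ hv⟩, e⟩

theorem image_sub {V S S' : Finset ℕ} {f : ℕ → ℕ} (hf : Set.BijOn f V V) (hS : S ⊆ V)
    (hS' : S' ⊆ V) (h : S.image f ⊆ S'.image f) : S ⊆ S' := by
  intro x hx
  obtain ⟨y, hy, e⟩ := Finset.mem_image.1 (h (Finset.mem_image_of_mem f hx))
  rw [← hf.2.1 (hS' hy) (hS hx) e]
  exact hy

theorem comp_transfer {M M' : Finset (ℕ × ℕ)} {V : Finset ℕ} {f : ℕ → ℕ}
    (hM : endpoints M = V) (hM' : endpoints M' = V) (hf : Set.BijOn f V V)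
    (hcl : ∀ S, S ⊆ V → (Cl M S ↔ Cl M' (S.image f))) :
    (∀ C, IsComponent M C → ∃ C', IsComponent M' C' ∧ endpoints C' = (endpoints C).image f) ∧
    (∀ C', IsComponent M' C' → ∃ C, IsComponent M C ∧ endpoints C' = (endpoints C).image f) ∧
    {C | IsComponent M C}.ncard = {C | IsComponent M' C}.ncard := by
  have hat : ∀ S, S ⊆ V → (AtomS M S ↔ AtomS M' (S.image f)) := by
    intro S hS
    unfold AtomS
    rw [hcl S hS]
    refine and_congr_right (fun _ => ?_)
    constructor
    · intro h S'' hS'' hc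
      obtain ⟨S', hS', rfl⟩ := image_pull (S := S) hf (hM' ▸ hc.1)
      refine h S' ⟨image_sub hf hS' hS hS''.1, fun hh => hS''.2 (Finset.image_subset_image hh)⟩ ?_
      exact (hcl S' hS').2 hc
    · intro h S' hS' hc
      have hS'V := hS'.1.trans hS
      exact h _ ⟨Finset.image_subset_image hS'.1, fun hh => hS'.2 (image_sub hf hS hS'V hh)⟩
        ((hcl S' hS'V).1 hc)
  refine ⟨?_, ?_, ?_⟩
  · intro C hC
    have ha := comp_to_atom hC
    exact atom_to_comp ((hat _ (hM ▸ ha.1.1)).1 ha)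
  · intro C' hC'
    have ha := comp_to_atom hC'
    obtain ⟨S, hS, e⟩ := image_pull (S := ∅) hf (hM' ▸ ha.1.1)
    rw [← e] at ha
    obtain ⟨C, hC, e'⟩ := atom_to_comp ((hat S hS).2 ha)
    exact ⟨C, hC, by rw [e', e]⟩
  · rw [ncard_comp, ncard_comp]
    have : {S | AtomS M' S} = (fun S => S.image f) '' {S | AtomS M S} := by
      ext S''
      constructor
      · intro h
        obtain ⟨S, hS, rfl⟩ := image_pull (S := ∅) hf (hM' ▸ h.1.1)
        exact ⟨S, (hat S hS).2 h, rfl⟩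
      · rintro ⟨S, hS, rfl⟩
        exact (hat S (hM ▸ hS.1.1)).1 hS
    rw [this, Set.ncard_image_of_injOn]
    intro S hS S' hS' e
    have e : S.image f = S'.image f := e
    have h1 : S ⊆ V := hM ▸ hS.1.1
    have h2 : S' ⊆ V := hM ▸ hS'.1.1
    exact Finset.Subset.antisymm (image_sub hf h1 h2 (by rw [e])) (image_sub hf h2 h1 (by rw [e]))

theorem mem_mDiagram {r c : ℕ} {T : ℕ → ℕ → ℕ} {p : ℕ × ℕ} :
    p ∈ mDiagram r c T ↔ ∃ i, i + 1 < r ∧ Arc c T i p.1 p.2 := by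
  unfold mDiagram Arc
  rw [Finset.mem_image]
  constructor
  · rintro ⟨⟨i, j⟩, hij, rfl⟩
    simp only [Finset.mem_product, Finset.mem_range] at hij
    exact ⟨i, by omega, j, hij.2, rfl, rfl⟩
  · rintro ⟨i, hi, j, hj, e1, e2⟩
    refine ⟨(i, j), ?_, Prod.ext e1 e2⟩
    simp only [Finset.mem_product, Finset.mem_range]
    omega

theorem endpoints_mDiagram {r c : ℕ} {T : ℕ → ℕ → ℕ} (hr : 1 < r) (h : IsRectSYT r c T) :
    endpoints (mDiagram r c T) = Finset.Icc 1 (r * c) := by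
  ext v
  rw [mem_endpoints, Finset.mem_Icc]
  constructor
  · rintro ⟨p, hp, e⟩
    obtain ⟨i, hi, j, hj, e1, e2⟩ := mem_mDiagram.1 hp
    have a1 := h.2.2.1 _ _ (by omega : i < r) (partner_spec h hi hj).1
    have a2 := h.2.2.1 _ _ hi hj
    omega
  · rintro ⟨h1, h2⟩
    obtain ⟨i, j, hi, hj, e⟩ := h.2.2.2 v h1 h2
    by_cases hi1 : i + 1 < r
    · obtain ⟨y, hy⟩ := (arc_match h hi1).exL ⟨j, hj, e⟩
      exact ⟨(v, y), mem_mDiagram.2 ⟨i, hi1, hy⟩, Or.inl rfl⟩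
    · obtain ⟨k, rfl⟩ : ∃ k, i = k + 1 := ⟨i - 1, by omega⟩
      obtain ⟨x, hx⟩ := (arc_match h hi).exR ⟨j, hj, e⟩
      exact ⟨(x, v), mem_mDiagram.2 ⟨k, hi, hx⟩, Or.inr rfl⟩

theorem cl_iff_closed {r c : ℕ} {T : ℕ → ℕ → ℕ} (hr : 1 < r) (h : IsRectSYT r c T)
    {S : Finset ℕ} {S' : Set ℕ} (hS : S ⊆ Finset.Icc 1 (r * c))
    (hSS : ∀ v, 1 ≤ v → v ≤ r * c → (v ∈ S ↔ v ∈ S')) :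
    Cl (mDiagram r c T) S ↔ S.Nonempty ∧ ClosedS r (Arc c T) S' := by
  have hb : ∀ i, i + 1 < r → ∀ x y, Arc c T i x y → (x ∈ S ↔ x ∈ S') ∧ (y ∈ S ↔ y ∈ S') := by
    rintro i hi x y ⟨j, hj, rfl, rfl⟩
    have a1 := h.2.2.1 _ _ (by omega : i < r) (partner_spec h hi hj).1
    have a2 := h.2.2.1 _ _ hi hj
    exact ⟨hSS _ a1.1 a1.2, hSS _ a2.1 a2.2⟩
  constructor
  · rintro ⟨-, h2, h3, h4⟩
    refine ⟨h2, ?_, ?_⟩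
    · intro i hi x y hR
      rw [← (hb i hi x y hR).1, ← (hb i hi x y hR).2]
      exact h3 (x, y) (mem_mDiagram.2 ⟨i, hi, hR⟩)
    · intro i hi i' hi' x y x' y' hR hR' a1 a2 a3
      rw [← (hb i hi x y hR).1, ← (hb i' hi' x' y' hR').1]
      exact h4 (x, y) (mem_mDiagram.2 ⟨i, hi, hR⟩) (x', y') (mem_mDiagram.2 ⟨i', hi', hR'⟩)
        a1 a2 a3
  · rintro ⟨h2, h3, h4⟩
    refine ⟨by rw [endpoints_mDiagram hr h]; exact hS, h2, ?_, ?_⟩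
    · intro p hp
      obtain ⟨i, hi, hR⟩ := mem_mDiagram.1 hp
      rw [(hb i hi _ _ hR).1, (hb i hi _ _ hR).2]
      exact h3 i hi _ _ hR
    · intro p hp q hq a1 a2 a3
      obtain ⟨i, hi, hR⟩ := mem_mDiagram.1 hp
      obtain ⟨i', hi', hR'⟩ := mem_mDiagram.1 hq
      rw [(hb i hi _ _ hR).1, (hb i' hi' _ _ hR').1]
      exact h4 i hi i' hi' _ _ _ _ hR hR' a1 a2 a3

theorem rot_bijOn (n : ℕ) :
    Set.BijOn (rotIdx n) (Finset.Icc 1 n : Finset ℕ) (Finset.Icc 1 n : Finset ℕ) := by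
  simp only [Finset.coe_Icc]
  refine ⟨?_, ?_, ?_⟩
  · intro x hx
    simp only [Set.mem_Icc, rotIdx] at hx ⊢
    split_ifs <;> omega
  · intro x hx y hy e
    simp only [Set.mem_Icc, rotIdx] at hx hy e
    split_ifs at e <;> omega
  · intro y hy
    simp only [Set.mem_Icc] at hy
    simp only [Set.mem_image, Set.mem_Icc, rotIdx]
    by_cases h : y = n
    · exact ⟨1, by omega, by simp [h]⟩
    · refine ⟨y + 1, by omega, ?_⟩
      rw [if_neg (by omega)]
      rfl

theorem cl_promote {r c : ℕ} {T : ℕ → ℕ → ℕ} (hr : 1 < r) (hc : 0 < c) (h : IsRectSYT r c T)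
    {S : Finset ℕ} (hS : S ⊆ Finset.Icc 1 (r * c)) :
    Cl (mDiagram r c T) S ↔ Cl (mDiagram r c (promote r c T)) (S.image (rotIdx (r * c))) := by
  obtain ⟨s, hs⟩ := exists_pathData (by omega) hc h
  have hP := promote_syt (by omega) hc h hs
  have hn : 1 ≤ r * c := Nat.mul_pos (by omega) hc
  have hbd : ∀ v ∈ S, 1 ≤ v ∧ v ≤ r * c := fun v hv => Finset.mem_Icc.1 (hS hv)
  let S1 : Set ℕ := {v | v ∈ S ∨ (v = r * c + 1 ∧ 1 ∈ S)}
  have hS1 : 1 ∈ S1 ↔ r * c + 1 ∈ S1 := by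
    simp only [S1, Set.mem_ofPred_eq]
    constructor
    · rintro (h | h)
      · exact Or.inr ⟨by trivial, h⟩
      · exact Or.inr ⟨by trivial, h.2⟩
    · rintro (h | h)
      · have := (hbd _ h).2; omega
      · exact Or.inl h.2
  rw [cl_iff_closed hr h hS (S' := S1), cl_iff_closed hr hP (S' := {v | v + 1 ∈ S1}),
    closed_promote hr hc h hS1, Finset.image_nonempty]
  · intro v hv
    obtain ⟨x, hx, rfl⟩ := Finset.mem_image.1 hv
    exact (rot_bijOn (r * c)).1 (hS hx)
  · intro v h1 h2
    simp only [S1, Set.mem_ofPred_eq, Finset.mem_image, rotIdx]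
    constructor
    · rintro ⟨x, hx, e⟩
      have := hbd x hx
      split_ifs at e with hx1
      · subst hx1
        exact Or.inr ⟨by omega, hx⟩
      · left
        rw [show v + 1 = x by omega]; exact hx
    · rintro (hx | ⟨e, hx⟩)
      · exact ⟨v + 1, hx, by rw [if_neg (by omega)]; rfl⟩
      · exact ⟨1, hx, by rw [if_pos rfl]; omega⟩
  · intro v h1 h2
    simp only [S1, Set.mem_ofPred_eq]
    constructor
    · exact Or.inl
    · rintro (h | h)
      · exact h
      · omega

/-- The endpoint sets of the components of `φ(P(T))` are exactly the images under `ρ`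
of the endpoint sets of the components of `φ(T)`; in particular `φ(T)` and `φ(P(T))`
have the same number of components. -/
theorem component_endpoints_rotate (r c : ℕ) (T : ℕ → ℕ → ℕ)
    (hr : 0 < r) (hc : 0 < c) (hT : IsRectSYT r c T) :
    (∀ C, IsComponent (mDiagram r c T) C →
       ∃ C', IsComponent (mDiagram r c (promote r c T)) C' ∧
         endpoints C' = rotSetPow (r * c) 1 (endpoints C)) ∧
    (∀ C', IsComponent (mDiagram r c (promote r c T)) C' →
       ∃ C, IsComponent (mDiagram r c T) C ∧
         endpoints C' = rotSetPow (r * c) 1 (endpoints C)) ∧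
    {C | IsComponent (mDiagram r c T) C}.ncard
      = {C | IsComponent (mDiagram r c (promote r c T)) C}.ncard := by
  rcases Nat.lt_or_ge 1 r with hr1 | hr1
  · obtain ⟨s, hs⟩ := exists_pathData hr hc hT
    have hP := promote_syt hr hc hT hs
    exact comp_transfer (endpoints_mDiagram hr1 hT) (endpoints_mDiagram hr1 hP)
      (rot_bijOn (r * c)) (fun S hS => cl_promote hr1 hc hT hS)
  · have hno : ∀ (U : ℕ → ℕ → ℕ) (C : Finset (ℕ × ℕ)), ¬ IsComponent (mDiagram r c U) C := by
      intro U C hC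
      obtain ⟨p, hp⟩ := hC.1.2.1
      obtain ⟨i, hi, -⟩ := mem_mDiagram.1 (hC.1.1 hp)
      omega
    refine ⟨fun C hC => (hno T C hC).elim, fun C hC => (hno _ C hC).elim, ?_⟩
    simp only [hno]
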